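/- Let π_0 ∈ (0,1), π_1 = 1 − π_0, τ = π_0/π_1, and α ∈ (1/2, 1]. Then the function d ↦ (1 − α) + (2α − 1) · ( π_0 Q(ln(τ)/d + d/2) + π_1 Q(d/2 − ln(τ)/d) ) is strictly decreasing on (0,∞). (This is the biased-transmitter-cost example: when the transmitter's and receiver's objectives are aligned with probability α > 1/2, the transmitter's Stackelberg risk under the receiver's likelihood-ratio test strictly decreases in the normalized separation d, so the Stackelberg equilibrium is informative with maximal separation.) -/

import Mathlib

/-- The standard Gaussian tail function `Q(x) = ∫_x^∞ (1/√(2π)) e^{-t²/2} dt`. -/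
noncomputable def Q (x : ℝ) : ℝ :=
  ∫ t in Set.Ioi x, (1 / Real.sqrt (2 * Real.pi)) * Real.exp (-t ^ 2 / 2)

lemma Q_integrable_aux : MeasureTheory.Integrable
    (fun t : ℝ => (1 / Real.sqrt (2 * Real.pi)) * Real.exp (-t ^ 2 / 2)) := by
  have h := (integrable_exp_neg_mul_sq (b := 1/2) (by norm_num)).const_mul
    (1 / Real.sqrt (2 * Real.pi))
  refine h.congr (Filter.Eventually.of_forall fun t => ?_)
  have : -(1/2 : ℝ) * t ^ 2 = -t ^ 2 / 2 := by ring
  simp only [this]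

lemma Q_hasDerivAt_aux (x : ℝ) :
    HasDerivAt Q (-((1 / Real.sqrt (2 * Real.pi)) * Real.exp (-x ^ 2 / 2))) x := by
  have hc : Continuous
    (fun t : ℝ => (1 / Real.sqrt (2 * Real.pi)) * Real.exp (-t ^ 2 / 2)) := by fun_prop
  have h1 := intervalIntegral.integral_hasDerivAt_right (hc.intervalIntegrable 0 x)
    (hc.stronglyMeasurableAtFilter _ _) hc.continuousAt
  have h2 := h1.const_sub (Q 0)
  refine h2.congr_of_eventuallyEq (Filter.Eventually.of_forall fun y => ?_)
  have h3 := intervalIntegral.integral_interval_add_Ioi (a := 0) (b := y)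
    Q_integrable_aux.integrableOn Q_integrable_aux.integrableOn
  simp only [Q]
  linarith

/-- Biased-transmitter-cost example: with priors `π₀ ∈ (0,1)`, `π₁ = 1 - π₀`,
`τ = π₀/π₁`, and alignment probability `α ∈ (1/2, 1]`, the transmitter's Stackelberg
risk `d ↦ (1-α) + (2α-1)(π₀ Q(ln τ/d + d/2) + π₁ Q(d/2 - ln τ/d))` under the
receiver's likelihood-ratio test is strictly decreasing on `(0, ∞)`. -/
theorem stmt_19 (π0 τ α : ℝ) (hπ : π0 ∈ Set.Ioo (0 : ℝ) 1)
    (hτ : τ = π0 / (1 - π0)) (hα : α ∈ Set.Ioc (1 / 2 : ℝ) 1) :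
    StrictAntiOn
      (fun d : ℝ =>
        (1 - α) + (2 * α - 1) *
          (π0 * Q (Real.log τ / d + d / 2) + (1 - π0) * Q (d / 2 - Real.log τ / d)))
      (Set.Ioi 0) := by
  obtain ⟨h0, h1⟩ := hπ
  obtain ⟨ha, -⟩ := hα
  have h1' : 0 < 1 - π0 := by linarith
  have hτ0 : 0 < τ := by rw [hτ]; positivity
  have key : ∀ d : ℝ, 0 < d → HasDerivAt (fun d : ℝ =>
        (1 - α) + (2 * α - 1) *
          (π0 * Q (Real.log τ / d + d / 2) + (1 - π0) * Q (d / 2 - Real.log τ / d)))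
      (-((2 * α - 1) * (π0 * ((1 / Real.sqrt (2 * Real.pi)) *
        Real.exp (-(Real.log τ / d + d / 2) ^ 2 / 2))))) d := by
    intro d hd
    have hL : HasDerivAt (fun d : ℝ => Real.log τ / d) (-Real.log τ / d ^ 2) d := by
      have := (hasDerivAt_inv hd.ne').const_mul (Real.log τ)
      simp only [div_eq_mul_inv]
      exact this.congr_deriv (by ring)
    have hh : HasDerivAt (fun d : ℝ => d / 2) (1 / 2) d := (hasDerivAt_id d).div_const 2
    have hA := (Q_hasDerivAt_aux _).comp d (hL.add hh)
    have hB := (Q_hasDerivAt_aux _).comp d (hh.sub hL)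
    have hF := (((hA.const_mul π0).add (hB.const_mul (1 - π0))).const_mul
      (2 * α - 1)).const_add (1 - α)
    refine hF.congr_deriv ?_
    have he : Real.exp (-(d / 2 - Real.log τ / d) ^ 2 / 2)
        = Real.exp (-(Real.log τ / d + d / 2) ^ 2 / 2) * τ := by
      nth_rewrite 3 [← Real.exp_log hτ0]
      rw [← Real.exp_add]
      congr 1
      field_simp
      ring
    have ht : (1 - π0) * τ = π0 := by rw [hτ]; field_simp
    simp only [Pi.add_apply, Pi.sub_apply]
    rw [he]
    generalize Real.exp (-(Real.log τ / d + d / 2) ^ 2 / 2) = E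
    generalize 1 / Real.sqrt (2 * Real.pi) = c
    generalize Real.log τ = L
    linear_combination (-(2 * α - 1) * c * E * (1 / 2 - -L / d ^ 2)) * ht
  refine strictAntiOn_of_deriv_neg (convex_Ioi 0)
    (fun d hd => (key d hd).continuousAt.continuousWithinAt) fun d hd => ?_
  rw [interior_Ioi] at hd
  rw [(key d hd).deriv]
  have : 0 < 2 * α - 1 := by linarith
  have : 0 < Real.sqrt (2 * Real.pi) := by positivity
  rw [neg_lt_zero]
  positivity
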